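/- In every MV-algebra A, define x→y := ¬x⊕y, p(x,y,z) := ((x→y)→z)∧((z→y)→x), t(x,y,z) := (y→(x∧z))∧(x∨z), and r(x,y,z) := p(x,y,z)∧t(x,y,z). Then for all x,y,z ∈ A: r(x,x,z)=z, r(x,y,y)=x, and r(x,y,x)=x; i.e. r is a Pixley term, so the variety of MV-algebras is arithmetical. -/

import Mathlib

namespace MVPaper

/-- An MV-algebra: a set with a binary `⊕`, a unary `¬`, and a constant `0`
satisfying the MV-algebra axioms. -/
class MV (α : Type*) where
  oplus : α → α → α
  neg : α → α
  zero : α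
  oplus_assoc : ∀ x y z : α, oplus x (oplus y z) = oplus (oplus x y) z
  oplus_comm : ∀ x y : α, oplus x y = oplus y x
  oplus_zero : ∀ x : α, oplus x zero = x
  neg_neg : ∀ x : α, neg (neg x) = x
  oplus_neg_zero : ∀ x : α, oplus x (neg zero) = neg zero
  lukasiewicz : ∀ x y : α,
    oplus (neg (oplus (neg x) y)) y = oplus (neg (oplus (neg y) x)) x

namespace MV

variable {α : Type*} [MV α]

/-- `1 := ¬0`. -/
def one : α := neg zero

/-- `x ⊙ y := ¬(¬x ⊕ ¬y)`. -/
def odot (x y : α) : α := neg (oplus (neg x) (neg y))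

/-- `x ⊖ y := ¬(¬x ⊕ y)`. -/
def ominus (x y : α) : α := neg (oplus (neg x) y)

/-- `d(x,y) := (x ⊖ y) ⊕ (y ⊖ x)`. -/
def dist (x y : α) : α := oplus (ominus x y) (ominus y x)

/-- The natural order: `x ≤ y` iff `¬x ⊕ y = 1`. -/
def le (x y : α) : Prop := oplus (neg x) y = one

/-- `x ∨ y := (x ⊖ y) ⊕ y`. -/
def sup (x y : α) : α := oplus (ominus x y) y

/-- `x ∧ y := x ⊙ (¬x ⊕ y)`. -/
def inf (x y : α) : α := odot x (oplus (neg x) y)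

/-- `n · a`, the `n`-fold sum `a ⊕ ⋯ ⊕ a`. -/
def nsmul : ℕ → α → α
  | 0, _ => zero
  | n + 1, a => oplus a (nsmul n a)

end MV

/-- Products of MV-algebras, with componentwise operations. -/
instance prodMV {α β : Type*} [MV α] [MV β] : MV (α × β) where
  oplus x y := (MV.oplus x.1 y.1, MV.oplus x.2 y.2)
  neg x := (MV.neg x.1, MV.neg x.2)
  zero := (MV.zero, MV.zero)
  oplus_assoc x y z :=
    congrArg₂ Prod.mk (MV.oplus_assoc _ _ _) (MV.oplus_assoc _ _ _)
  oplus_comm x y :=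
    congrArg₂ Prod.mk (MV.oplus_comm _ _) (MV.oplus_comm _ _)
  oplus_zero x := by
    obtain ⟨a, b⟩ := x
    exact congrArg₂ Prod.mk (MV.oplus_zero a) (MV.oplus_zero b)
  neg_neg x := by
    obtain ⟨a, b⟩ := x
    exact congrArg₂ Prod.mk (MV.neg_neg a) (MV.neg_neg b)
  oplus_neg_zero x :=
    congrArg₂ Prod.mk (MV.oplus_neg_zero _) (MV.oplus_neg_zero _)
  lukasiewicz x y :=
    congrArg₂ Prod.mk (MV.lukasiewicz _ _) (MV.lukasiewicz _ _)

/-- A homomorphism of MV-algebras: a map preserving `⊕`, `¬` and `0`. -/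
structure IsHom {α β : Type*} [MV α] [MV β] (f : α → β) : Prop where
  map_zero : f MV.zero = MV.zero
  map_oplus : ∀ x y : α, f (MV.oplus x y) = MV.oplus (f x) (f y)
  map_neg : ∀ x : α, f (MV.neg x) = MV.neg (f x)

/-- An ideal of an MV-algebra: contains `0`, closed under `⊕`, downward closed. -/
structure IsIdeal {α : Type*} [MV α] (I : Set α) : Prop where
  zero_mem : MV.zero ∈ I
  oplus_mem : ∀ ⦃x⦄, x ∈ I → ∀ ⦃y⦄, y ∈ I → MV.oplus x y ∈ I
  lower_mem : ∀ ⦃x⦄, x ∈ I → ∀ ⦃y⦄, MV.le y x → y ∈ I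

/-- The kernel of a homomorphism. -/
def ker {α β : Type*} [MV α] [MV β] (f : α → β) : Set α := {x | f x = MV.zero}

/-- The radical of an MV-algebra: `Rad(A) = {a | n·a ≤ ¬a for all n}`
(the intersection of all maximal proper ideals). -/
def Rad (α : Type*) [MV α] : Set α :=
  {a | ∀ n : ℕ, MV.le (MV.nsmul n a) (MV.neg a)}

/-- `P(A) := Rad(A) ∪ ¬Rad(A)`. -/
def PSet (α : Type*) [MV α] : Set α :=
  Rad α ∪ {x | MV.neg x ∈ Rad α}

/-- An MV-algebra is trivial if `0 = 1`. -/
def IsTrivial (α : Type*) [MV α] : Prop := (MV.zero : α) = MV.one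

/-- An MV-algebra is semisimple if its radical is trivial. -/
def Semisimple (α : Type*) [MV α] : Prop := Rad α = ({MV.zero} : Set α)

/-- An MV-algebra is perfect if `A = Rad(A) ∪ ¬Rad(A)`. -/
def Perfect (α : Type*) [MV α] : Prop := ∀ a : α, a ∈ PSet α

/-- `q : α → Q` realizes `Q` as the quotient of `α` by the ideal `I`,
i.e. by the congruence `x ∼ y ↔ d(x,y) ∈ I`. -/
structure IsQuotientBy {α Q : Type*} [MV α] [MV Q] (I : Set α) (q : α → Q) : Prop where
  hom : IsHom q
  surj : Function.Surjective q
  eq_iff : ∀ x y : α, q x = q y ↔ MV.dist x y ∈ I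

/-- `x → y := ¬x ⊕ y`. -/
def arr {α : Type*} [MV α] (x y : α) : α := MV.oplus (MV.neg x) y

/-- `p(x,y,z) := ((x→y)→z) ∧ ((z→y)→x)`. -/
def pterm {α : Type*} [MV α] (x y z : α) : α :=
  MV.inf (arr (arr x y) z) (arr (arr z y) x)

/-- `t(x,y,z) := (y→(x∧z)) ∧ (x∨z)`. -/
def tterm {α : Type*} [MV α] (x y z : α) : α :=
  MV.inf (arr y (MV.inf x z)) (MV.sup x z)

/-- `r(x,y,z) := p(x,y,z) ∧ t(x,y,z)`. -/
def rterm {α : Type*} [MV α] (x y z : α) : α :=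
  MV.inf (pterm x y z) (tterm x y z)

namespace MV

variable {α : Type*} [MV α]

theorem zero_oplus (a : α) : oplus zero a = a := by
  rw [oplus_comm, oplus_zero]

theorem neg_one : neg (one : α) = zero := neg_neg zero

theorem oplus_one (a : α) : oplus a one = one := oplus_neg_zero a

theorem neg_oplus_self (a : α) : oplus (neg a) a = one := by
  have h := lukasiewicz a (neg zero)
  rw [oplus_neg_zero, neg_neg, zero_oplus] at h
  exact h.symm

theorem le_refl (a : α) : le a a := neg_oplus_self a

theorem le_oplus_right (a b : α) : le a (oplus a b) := by
  rw [le, oplus_assoc, neg_oplus_self, oplus_comm, oplus_one]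

theorem le_oplus_left (a b : α) : le a (oplus b a) := by
  rw [oplus_comm]
  exact le_oplus_right a b

theorem sup_comm (a b : α) : sup a b = sup b a := lukasiewicz a b

theorem sup_eq_right {a b : α} (h : le a b) : sup a b = b := by
  rw [sup, ominus, show oplus (neg a) b = one from h, neg_one, zero_oplus]

theorem le_sup_right (a b : α) : le b (sup a b) := le_oplus_left b _

theorem le_sup_left (a b : α) : le a (sup a b) := by
  rw [sup_comm]
  exact le_sup_right b a

theorem exists_eq_oplus_of_le {a b : α} (h : le a b) : ∃ c, b = oplus a c :=
  ⟨ominus b a, by rw [oplus_comm, ← sup, sup_comm, sup_eq_right h]⟩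

theorem oplus_le_oplus_left {a b : α} (h : le a b) (c : α) :
    le (oplus c a) (oplus c b) := by
  obtain ⟨d, rfl⟩ := exists_eq_oplus_of_le h
  rw [oplus_assoc]
  exact le_oplus_right _ d

theorem neg_le_neg {a b : α} (h : le a b) : le (neg b) (neg a) := by
  rw [le, neg_neg, oplus_comm]
  exact h

theorem odot_le_odot_left {a b : α} (h : le a b) (c : α) :
    le (odot c a) (odot c b) :=
  neg_le_neg (oplus_le_oplus_left (neg_le_neg h) (neg c))

theorem inf_comm (a b : α) : inf a b = inf b a := by
  have h := lukasiewicz (neg b) (neg a)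
  rw [neg_neg, neg_neg, oplus_comm b, oplus_comm a, oplus_comm _ (neg a),
    oplus_comm _ (neg b)] at h
  exact congrArg neg h

theorem inf_eq_left {a b : α} (h : le a b) : inf a b = a := by
  rw [inf, show oplus (neg a) b = one from h, odot, neg_one, oplus_zero, neg_neg]

theorem inf_eq_right {a b : α} (h : le b a) : inf a b = b := by
  rw [inf_comm, inf_eq_left h]

theorem le_inf {a b c : α} (ha : le c a) (hb : le c b) : le c (inf a b) := by
  have h : le (inf a c) (inf a b) := odot_le_odot_left (oplus_le_oplus_left hb _) a
  rwa [inf_eq_right ha] at h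

theorem le_arr (a b : α) : le b (arr a b) := le_oplus_left b _

theorem arr_self (a : α) : arr a a = one := neg_oplus_self a

theorem one_arr (a : α) : arr one a = a := by
  rw [arr, neg_one, zero_oplus]

theorem arr_arr_self_right (a b : α) : arr (arr a b) b = sup a b := rfl

theorem arr_inf_self_left (a b : α) : arr a (inf a b) = arr a b := by
  have h : oplus (ominus (arr a b) (neg a)) (neg a) = arr a b := by
    rw [← sup, sup_comm]
    exact sup_eq_right (le_oplus_right _ b)
  rw [ominus, oplus_comm _ (neg a), oplus_comm _ (neg a)] at h
  exact h

end MV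

open MV in
/-- `r` is a Pixley term for MV-algebras: `r(x,x,z)=z`, `r(x,y,y)=x`,
`r(x,y,x)=x`; hence the variety of MV-algebras is arithmetical. -/
theorem pixley_term {α : Type*} [MV α] (x y z : α) :
    rterm x x z = z ∧ rterm x y y = x ∧ rterm x y x = x := by
  refine ⟨?_, ?_, ?_⟩
  · rw [rterm, pterm, tterm, arr_self, one_arr, arr_arr_self_right,
      inf_eq_left (le_sup_left z x), arr_inf_self_left]
    exact inf_eq_left (le_inf (le_arr x z) (le_sup_right x z))
  · rw [rterm, pterm, tterm, arr_self, one_arr, arr_arr_self_right,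
      inf_eq_right (le_sup_left x y), inf_comm x y, arr_inf_self_left]
    exact inf_eq_left (le_inf (le_arr y x) (le_sup_left x y))
  · rw [rterm, pterm, tterm, inf_eq_left (le_refl _), inf_eq_left (le_refl x),
      sup_eq_right (le_refl x), inf_eq_right (le_arr y x)]
    exact inf_eq_right (le_arr _ x)

end MVPaper
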